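/- Let (X,Σ,m) be a σ-finite measure space, B a separable Banach space, and E a Banach B-bundle over X. Suppose there exists, for each ε ∈ (0,2], a constant c(ε) > 0 such that δ_{E(x)}(ε) ≥ c(ε) for m-a.e. x ∈ X. Then for every p ∈ (1,∞) the section space Γ_p(E) is a uniformly convex Banach space. Conversely, if Γ_p(E) is uniformly convex for some p ∈ (1,∞), then ess inf_x δ_{E(x)}(ε) > 0 for every ε ∈ (0,2] (so in particular m-a.e. fiber is uniformly convex). -/

import Mathlib

open MeasureTheory
open scoped ENNReal

/-- A *Banach `B`-bundle* over a measurable space `X`: a weakly measurable multivalued map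
whose values are closed linear subspaces of `B`. -/
structure BanachBundle (X : Type*) [MeasurableSpace X]
    (B : Type*) [NormedAddCommGroup B] [NormedSpace ℝ B] where
  fiber : X → Submodule ℝ B
  isClosed_fiber : ∀ x, IsClosed (fiber x : Set B)
  weaklyMeasurable : ∀ U : Set B, IsOpen U →
    MeasurableSet {x | ((fiber x : Set B) ∩ U).Nonempty}

/-- The space `Γ_p(E)` of `L^p`-sections of a Banach bundle `E`, realized as the subspace of
`L^p(m;B)` of elements whose representatives take values in the fibers `m`-a.e. -/
noncomputable def BanachBundle.sections {X B : Type*} [MeasurableSpace X]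
    [NormedAddCommGroup B] [NormedSpace ℝ B]
    (m : Measure X) (p : ℝ≥0∞) [Fact (1 ≤ p)] (E : BanachBundle X B) :
    Submodule ℝ (Lp B p m) where
  carrier := {f | ∀ᵐ x ∂m, (f : X → B) x ∈ E.fiber x}
  zero_mem' := by
    filter_upwards [Lp.coeFn_zero B p m] with x hx
    show (((0 : Lp B p m) : X → B)) x ∈ E.fiber x
    rw [hx]
    exact (E.fiber x).zero_mem
  add_mem' := by
    intro f g hf hg
    filter_upwards [hf, hg, Lp.coeFn_add f g] with x h1 h2 h3
    show (((f + g : Lp B p m) : X → B)) x ∈ E.fiber x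
    rw [h3]
    exact (E.fiber x).add_mem h1 h2
  smul_mem' := by
    intro c f hf
    filter_upwards [hf, Lp.coeFn_smul c f] with x h1 h2
    show (((c • f : Lp B p m) : X → B)) x ∈ E.fiber x
    rw [h2]
    exact (E.fiber x).smul_mem c h1

/-- The modulus of convexity of a normed space `V`. -/
noncomputable def modulusOfConvexity (V : Type*) [NormedAddCommGroup V] [Module ℝ V]
    (ε : ℝ) : ℝ :=
  sInf {r : ℝ | ∃ v w : V, ‖v‖ = 1 ∧ ‖w‖ = 1 ∧ ε ≤ ‖v - w‖ ∧ r = 1 - ‖(2 : ℝ)⁻¹ • (v + w)‖}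

/-- The modulus of convexity of a subset `S` (a fiber of a bundle), with the convention that
the infimum over the empty family equals `1`. -/
noncomputable def fiberModulus {B : Type*} [NormedAddCommGroup B] (S : Set B) (ε : ℝ) : ℝ :=
  sInf (insert 1 {r : ℝ | ∃ v ∈ S, ∃ w ∈ S,
    ‖v‖ = 1 ∧ ‖w‖ = 1 ∧ ε ≤ ‖v - w‖ ∧ r = 1 - ‖v + w‖ / 2})

theorem le_one_sub_half_norm_add_of_le_fiberModulus {B : Type*} [NormedAddCommGroup B]
    {S : Set B} {ε c : ℝ} (h : c ≤ fiberModulus S ε) {v w : B} (hv : v ∈ S) (hw : w ∈ S)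
    (hv1 : ‖v‖ = 1) (hw1 : ‖w‖ = 1) (hvw : ε ≤ ‖v - w‖) : c ≤ 1 - ‖v + w‖ / 2 := by
  refine h.trans (csInf_le ⟨0, ?_⟩ (Or.inr ⟨v, hv, w, hw, hv1, hw1, hvw, rfl⟩))
  rintro r (rfl | ⟨a, -, b, -, ha, hb, -, rfl⟩)
  · exact zero_le_one
  · linarith [norm_add_le a b]

theorem exists_of_fiberModulus_lt {B : Type*} [NormedAddCommGroup B]
    {S : Set B} {ε c : ℝ} (hc : c ≤ 1) (h : fiberModulus S ε < c) :
    ∃ v ∈ S, ∃ w ∈ S, ‖v‖ = 1 ∧ ‖w‖ = 1 ∧ ε ≤ ‖v - w‖ ∧ 2 * (1 - c) < ‖v + w‖ := by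
  obtain ⟨r, rfl | ⟨v, hv, w, hw, hv1, hw1, hvw, rfl⟩, hr⟩ :=
    exists_lt_of_csInf_lt (Set.insert_nonempty _ _) h
  · exact absurd hr hc.not_gt
  · exact ⟨v, hv, w, hw, hv1, hw1, hvw, by linarith⟩

theorem Real.half_add_rpow_le {q a b : ℝ} (hq : 1 ≤ q) (ha : 0 ≤ a) (hb : 0 ≤ b) :
    ((a + b) / 2) ^ q ≤ (a ^ q + b ^ q) / 2 := by
  have h := (convexOn_rpow hq).2 (show a ∈ Set.Ici 0 from ha) (show b ∈ Set.Ici 0 from hb)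
    (show (0 : ℝ) ≤ 1 / 2 by norm_num) (show (0 : ℝ) ≤ 1 / 2 by norm_num) (by norm_num)
  simp only [smul_eq_mul] at h
  calc ((a + b) / 2) ^ q = (1 / 2 * a + 1 / 2 * b) ^ q := by ring_nf
    _ ≤ _ := h
    _ = _ := by ring

/-- Away from the diagonal, the convexity inequality for `x ↦ x ^ q` has a uniform gap. -/
theorem Real.exists_half_one_add_rpow_le {q s : ℝ} (hq : 1 < q) (hs : s < 1) :
    ∃ μ > 0, ∀ b, 0 ≤ b → b ≤ s →
      ((1 + b) / 2) ^ q ≤ (1 - μ) * ((1 + b ^ q) / 2) := by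
  have hcont : ContinuousOn (fun b : ℝ => (1 + b ^ q) / 2 - ((1 + b) / 2) ^ q)
      (Set.Icc 0 s) := by
    have h1 : Continuous fun b : ℝ => b ^ q := Real.continuous_rpow_const (by linarith)
    have h2 : Continuous fun b : ℝ => ((1 + b) / 2) ^ q := h1.comp (by fun_prop)
    exact (by fun_prop : Continuous _).continuousOn
  have hpos : ∀ b ∈ Set.Icc 0 s, 0 < (1 + b ^ q) / 2 - ((1 + b) / 2) ^ q := by
    rintro b ⟨hb0, hbs⟩
    have h := (strictConvexOn_rpow hq).2 (show (1 : ℝ) ∈ Set.Ici 0 by simp)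
      (show b ∈ Set.Ici 0 from hb0) (by linarith : b < 1).ne'
      (show (0 : ℝ) < 1 / 2 by norm_num) (show (0 : ℝ) < 1 / 2 by norm_num) (by norm_num)
    simp only [smul_eq_mul, Real.one_rpow] at h
    have : 1 / 2 * 1 + 1 / 2 * b = (1 + b) / 2 := by ring
    rw [this] at h
    linarith
  obtain ⟨μ, hμ, h⟩ := isCompact_Icc.exists_forall_le' hcont hpos
  refine ⟨μ, hμ, fun b hb0 hbs => ?_⟩
  have h1 := h b ⟨hb0, hbs⟩
  have h2 : b ^ q ≤ 1 := Real.rpow_le_one hb0 (by linarith) (by linarith)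
  nlinarith [mul_nonneg hμ.le (sub_nonneg.2 h2)]

section PointwiseConvexity

variable {q t c : ℝ}

theorem exists_half_norm_add_rpow_le_of_norm_eq_one (hq : 1 < q) (ht : 0 < t) (ht1 : t ≤ 1)
    (hc : 0 < c) :
    ∃ δ > 0, ∀ {B : Type*} [NormedAddCommGroup B] [NormedSpace ℝ B] (S : Submodule ℝ B),
      c ≤ fiberModulus (S : Set B) (t / 2) → ∀ v ∈ S, ∀ w ∈ S, ‖v‖ = 1 → ‖w‖ ≤ 1 →
        t ≤ ‖v - w‖ → (‖v + w‖ / 2) ^ q ≤ (1 - δ) * ((1 + ‖w‖ ^ q) / 2) := by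
  obtain ⟨μ, hμ, hfar⟩ := Real.exists_half_one_add_rpow_le hq (by linarith : 1 - t / 2 < 1)
  refine ⟨min μ (c / 2), lt_min hμ (by positivity), ?_⟩
  intro B _ _ S hS v hv w hw hv1 hw1 hvw
  have hb : 0 ≤ ‖w‖ := norm_nonneg w
  have hbq : 0 ≤ (1 + ‖w‖ ^ q) / 2 := by positivity
  rcases le_or_gt ‖w‖ (1 - t / 2) with hfw | hnw
  · calc (‖v + w‖ / 2) ^ q ≤ ((1 + ‖w‖) / 2) ^ q := by
          gcongr
          exact hv1 ▸ norm_add_le v w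
      _ ≤ _ := hfar _ hb hfw
      _ ≤ _ := by gcongr; exact min_le_left _ _
  · have hw0 : 0 < ‖w‖ := by linarith
    set w' := ‖w‖⁻¹ • w with hw'
    have hww' : w = ‖w‖ • w' := by rw [hw', smul_inv_smul₀ hw0.ne']
    have hw'1 : ‖w'‖ = 1 := by
      rw [hw', norm_smul, norm_inv, norm_norm, inv_mul_cancel₀ hw0.ne']
    have hdist : ‖w' - w‖ = 1 - ‖w‖ := by
      have : w' - w = (1 - ‖w‖) • w' := by rw [sub_smul, one_smul, ← hww']
      rw [this, norm_smul, hw'1, mul_one, Real.norm_of_nonneg (by linarith)]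
    have hvw' : t / 2 ≤ ‖v - w'‖ := by
      have := norm_sub_le_norm_sub_add_norm_sub v w' w
      linarith
    have hcc := le_one_sub_half_norm_add_of_le_fiberModulus hS hv (S.smul_mem _ hw) hv1 hw'1 hvw'
    have hcn : c ≤ 1 := by linarith [norm_nonneg (v + w')]
    have hsum : ‖v + w‖ ≤ (1 - ‖w‖) + ‖w‖ * ‖v + w'‖ := by
      have : v + w = (1 - ‖w‖) • v + ‖w‖ • (v + w') := by
        rw [smul_add, ← hww', sub_smul, one_smul]; abel
      rw [this]
      refine (norm_add_le _ _).trans_eq ?_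
      rw [norm_smul, norm_smul, hv1, norm_norm, Real.norm_of_nonneg (by linarith), mul_one]
    have hle : ‖v + w‖ / 2 ≤ (1 + ‖w‖) / 2 * (1 - c / 2) := by
      nlinarith [mul_le_mul_of_nonneg_left hcc hb]
    calc (‖v + w‖ / 2) ^ q ≤ ((1 + ‖w‖) / 2 * (1 - c / 2)) ^ q := by gcongr
      _ = ((1 + ‖w‖) / 2) ^ q * (1 - c / 2) ^ q :=
          Real.mul_rpow (by positivity) (by linarith)
      _ ≤ ((1 + ‖w‖ ^ q) / 2) * (1 - c / 2) := by
          gcongr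
          · exact Real.rpow_nonneg (by linarith) q
          · simpa using Real.half_add_rpow_le hq.le zero_le_one hb
          · exact Real.rpow_le_self_of_le_one (by linarith) (by linarith) hq.le
      _ ≤ _ := by
          rw [mul_comm]
          gcongr
          exact min_le_right _ _

theorem exists_half_norm_add_rpow_le (hq : 1 < q) (ht : 0 < t) (ht1 : t ≤ 1) (hc : 0 < c) :
    ∃ δ > 0, ∀ {B : Type*} [NormedAddCommGroup B] [NormedSpace ℝ B] (S : Submodule ℝ B),
      c ≤ fiberModulus (S : Set B) (t / 2) → ∀ v ∈ S, ∀ w ∈ S,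
        t * max ‖v‖ ‖w‖ ≤ ‖v - w‖ →
          (‖v + w‖ / 2) ^ q ≤ (1 - δ) * ((‖v‖ ^ q + ‖w‖ ^ q) / 2) := by
  obtain ⟨δ, hδ, h⟩ := exists_half_norm_add_rpow_le_of_norm_eq_one hq ht ht1 hc
  refine ⟨δ, hδ, ?_⟩
  intro B _ _ S hS v hv w hw hvw
  wlog hle : ‖w‖ ≤ ‖v‖ generalizing v w
  · rw [add_comm v w, add_comm (‖v‖ ^ q)]
    exact this w hw v hv (by rwa [max_comm, norm_sub_rev]) (not_le.1 hle).le
  rw [max_eq_left hle] at hvw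
  rcases (norm_nonneg v).eq_or_lt with hv0 | hv0
  · have hw0 : ‖w‖ = 0 := le_antisymm (hle.trans_eq hv0.symm) (norm_nonneg w)
    have hq0 : q ≠ 0 := by linarith
    rw [norm_eq_zero.1 hv0.symm, norm_eq_zero.1 hw0]
    simp [hq0]
  set a := ‖v‖ with ha
  have hnorm : ∀ u : B, ‖a⁻¹ • u‖ = a⁻¹ * ‖u‖ := fun u => by
    rw [norm_smul, Real.norm_of_nonneg (by positivity)]
  have hscaled := h S hS (a⁻¹ • v) (S.smul_mem _ hv) (a⁻¹ • w) (S.smul_mem _ hw)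
    (by rw [hnorm, inv_mul_cancel₀ hv0.ne'])
    (by rw [hnorm, inv_mul_le_one₀ hv0]; exact hle)
    (by rw [← smul_sub, hnorm, le_inv_mul_iff₀ hv0, mul_comm]; exact hvw)
  rw [← smul_add, hnorm, hnorm] at hscaled
  have haq : 0 < a ^ q := Real.rpow_pos_of_pos hv0 q
  have hl : ‖v + w‖ / 2 = a * (a⁻¹ * ‖v + w‖ / 2) := by field_simp
  have hr : ‖w‖ ^ q = a ^ q * (a⁻¹ * ‖w‖) ^ q := by
    rw [← Real.mul_rpow hv0.le (by positivity), mul_inv_cancel_left₀ hv0.ne']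
  rw [hl, Real.mul_rpow hv0.le (by positivity), hr]
  nlinarith [mul_le_mul_of_nonneg_left hscaled haq.le]

theorem exists_half_norm_add_rpow_add_le (hq : 1 < q) (ht : 0 < t) (ht1 : t ≤ 1) (hc : 0 < c) :
    ∃ κ > 0, ∀ {B : Type*} [NormedAddCommGroup B] [NormedSpace ℝ B] (S : Submodule ℝ B),
      c ≤ fiberModulus (S : Set B) (t / 2) → ∀ v ∈ S, ∀ w ∈ S,
        (‖v + w‖ / 2) ^ q + κ * ‖v - w‖ ^ q ≤
          (1 / 2 + κ * t ^ q) * (‖v‖ ^ q + ‖w‖ ^ q) := by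
  obtain ⟨δ, hδ, h⟩ := exists_half_norm_add_rpow_le hq ht ht1 hc
  refine ⟨δ / (2 * 2 ^ q), by positivity, ?_⟩
  intro B _ _ S hS v hv w hw
  have hq0 : 0 ≤ q := by linarith
  have hmax : (max ‖v‖ ‖w‖) ^ q ≤ ‖v‖ ^ q + ‖w‖ ^ q := by
    rcases max_choice ‖v‖ ‖w‖ with hm | hm <;> rw [hm]
    · linarith [Real.rpow_nonneg (norm_nonneg w) q]
    · linarith [Real.rpow_nonneg (norm_nonneg v) q]
  have hm0 : 0 ≤ max ‖v‖ ‖w‖ := (norm_nonneg v).trans (le_max_left _ _)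
  set κ := δ / (2 * 2 ^ q) with hκ
  have hκ0 : 0 < κ := by positivity
  rcases le_total (t * max ‖v‖ ‖w‖) ‖v - w‖ with hvw | hvw
  · have hd : ‖v - w‖ ^ q ≤ 2 ^ q * (‖v‖ ^ q + ‖w‖ ^ q) := by
      calc ‖v - w‖ ^ q ≤ (2 * max ‖v‖ ‖w‖) ^ q := by
            gcongr
            linarith [norm_sub_le v w, le_max_left ‖v‖ ‖w‖, le_max_right ‖v‖ ‖w‖]
        _ = 2 ^ q * (max ‖v‖ ‖w‖) ^ q := Real.mul_rpow zero_le_two hm0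
        _ ≤ _ := by gcongr
    have hδκ : κ * 2 ^ q = δ / 2 := by rw [hκ]; field_simp
    have h1 := h S hS v hv w hw hvw
    have h2 := mul_le_mul_of_nonneg_left hd hκ0.le
    rw [← mul_assoc, hδκ] at h2
    have h3 : 0 ≤ κ * t ^ q * (‖v‖ ^ q + ‖w‖ ^ q) := by positivity
    linarith
  · have hd : ‖v - w‖ ^ q ≤ t ^ q * (‖v‖ ^ q + ‖w‖ ^ q) := by
      calc ‖v - w‖ ^ q ≤ (t * max ‖v‖ ‖w‖) ^ q := by gcongr
        _ = t ^ q * (max ‖v‖ ‖w‖) ^ q := Real.mul_rpow ht.le hm0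
        _ ≤ _ := by gcongr
    have h1 : (‖v + w‖ / 2) ^ q ≤ (‖v‖ ^ q + ‖w‖ ^ q) / 2 :=
      (by gcongr; exact norm_add_le v w : (‖v + w‖ / 2) ^ q ≤ ((‖v‖ + ‖w‖) / 2) ^ q).trans
        (Real.half_add_rpow_le hq.le (norm_nonneg v) (norm_nonneg w))
    have h2 := mul_le_mul_of_nonneg_left hd hκ0.le
    linarith

end PointwiseConvexity

theorem norm_inv_smul_sub_le {B : Type*} [NormedAddCommGroup B] [NormedSpace ℝ B] {v u : B} (hu : ‖u‖ = 1) :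
    ‖‖v‖⁻¹ • v - u‖ ≤ 2 * ‖v - u‖ := by
  rcases eq_or_ne v 0 with rfl | hv
  · simp [hu]
  have hv' : ‖v‖ ≠ 0 := norm_ne_zero_iff.2 hv
  have h1 : ‖‖v‖⁻¹ • v - v‖ = |1 - ‖v‖| := by
    have : ‖v‖⁻¹ • v - v = (1 - ‖v‖) • (‖v‖⁻¹ • v) := by
      rw [sub_smul, one_smul, smul_inv_smul₀ hv']
    rw [this, norm_smul, norm_smul, norm_inv, norm_norm, inv_mul_cancel₀ hv', mul_one,
      Real.norm_eq_abs]
  have h2 : |1 - ‖v‖| ≤ ‖v - u‖ := by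
    rw [← hu, norm_sub_rev]
    exact abs_norm_sub_norm_le u v
  linarith [norm_sub_le_norm_sub_add_norm_sub (‖v‖⁻¹ • v) v u]

theorem MeasureTheory.Lp.mul_measureReal_rpow_le_norm {X B : Type*} [MeasurableSpace X]
    {m : Measure X} [NormedAddCommGroup B] {p : ℝ≥0∞} {A : Set X} (hA : MeasurableSet A)
    (hAm : m A ≠ ∞) (hp0 : p ≠ 0) (hp : p ≠ ∞) {t : ℝ} (ht : 0 ≤ t) {f : Lp B p m}
    (hf : ∀ᵐ x ∂m, x ∈ A → t ≤ ‖f x‖) : t * m.real A ^ (1 / p.toReal) ≤ ‖f‖ := by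
  rw [← Real.norm_of_nonneg ht, ← norm_indicatorConstLp (hs := hA) (hμs := hAm) hp0 hp]
  refine Lp.norm_le_norm_of_ae_le ?_
  filter_upwards [hf, indicatorConstLp_coeFn (p := p) (hs := hA) (hμs := hAm) (c := t)]
    with x hx hind
  rw [hind]
  by_cases hxA : x ∈ A
  · simpa [hxA, abs_of_nonneg ht] using hx hxA
  · simp [hxA]

section Sections

variable {X B : Type*} [MeasurableSpace X] {m : Measure X}
  [NormedAddCommGroup B] [NormedSpace ℝ B] {p : ℝ≥0∞} [Fact (1 ≤ p)]

theorem BanachBundle.isClosed_sections (E : BanachBundle X B) :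
    IsClosed (E.sections m p : Set (Lp B p m)) := by
  refine isClosed_of_closure_subset fun f hf => ?_
  obtain ⟨u, hu, hlim⟩ := mem_closure_iff_seq_limit.1 hf
  obtain ⟨φ, -, hφ⟩ := (tendstoInMeasure_of_tendsto_Lp hlim).exists_seq_tendsto_ae
  have hmem : ∀ᵐ x ∂m, ∀ n, (u n : X → B) x ∈ E.fiber x := ae_all_iff.2 hu
  filter_upwards [hφ, hmem] with x hx hux
  exact (E.isClosed_fiber x).mem_of_tendsto hx (.of_forall fun n => hux (φ n))

theorem BanachBundle.uniformConvexSpace_sections (E : BanachBundle X B)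
    (h : ∀ ε ∈ Set.Ioc (0 : ℝ) 2, ∃ c > (0 : ℝ),
      ∀ᵐ x ∂m, c ≤ fiberModulus (E.fiber x : Set B) ε)
    (hp : 1 < p) (hp' : p ≠ ∞) : UniformConvexSpace (E.sections m p) := by
  set q := p.toReal with hq_def
  have hp0 : p ≠ 0 := (zero_lt_one.trans hp).ne'
  have hq : 1 < q := by simpa using (ENNReal.toReal_lt_toReal ENNReal.one_ne_top hp').2 hp
  have hq0 : 0 < q := by linarith
  have hint (f : Lp B p m) : Integrable (fun x => ‖f x‖ ^ q) m :=
    (Lp.memLp f).integrable_norm_rpow hp0 hp'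
  have hnorm (f : Lp B p m) : ‖f‖ ^ q = ∫ x, ‖f x‖ ^ q ∂m := by
    have hI : 0 ≤ ∫ x, ‖f x‖ ^ q ∂m := integral_nonneg fun x => by positivity
    rw [Lp.norm_def, (Lp.memLp f).eLpNorm_eq_integral_rpow_norm hp0 hp',
      ENNReal.toReal_ofReal (Real.rpow_nonneg hI _), Real.rpow_inv_rpow hI hq0.ne']
  constructor
  intro ε hε
  set t := min 1 (ε / 4 ^ q⁻¹) with ht_def
  have ht : 0 < t := lt_min one_pos (by positivity)
  have htε : t ^ q ≤ ε ^ q / 4 := by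
    calc t ^ q ≤ (ε / 4 ^ q⁻¹) ^ q := by gcongr; exact min_le_right _ _
      _ = ε ^ q / 4 := by
        rw [Real.div_rpow hε.le (by positivity), Real.rpow_inv_rpow (by norm_num) hq0.ne']
  obtain ⟨c, hc, hcE⟩ := h (t / 2) ⟨by positivity, by linarith [min_le_left 1 (ε / 4 ^ q⁻¹)]⟩
  obtain ⟨κ, hκ, hineq⟩ := exists_half_norm_add_rpow_add_le hq ht (min_le_left _ _) hc
  set s := κ * ε ^ q / 2 with hs
  have hs0 : 0 < s := by positivity
  have key : ∀ f g : E.sections m p, ‖f‖ = 1 → ‖g‖ = 1 → ε ≤ ‖f - g‖ →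
      (‖f + g‖ / 2) ^ q ≤ 1 - s := by
    rintro ⟨f, hf⟩ ⟨g, hg⟩ hf1 hg1 hfg
    change ‖f‖ = 1 at hf1
    change ‖g‖ = 1 at hg1
    change ε ≤ ‖f - g‖ at hfg
    change (‖f + g‖ / 2) ^ q ≤ 1 - s
    have hae : ∀ᵐ x ∂m, (2 ^ q)⁻¹ * ‖(f + g) x‖ ^ q + κ * ‖(f - g) x‖ ^ q ≤
        (1 / 2 + κ * t ^ q) * (‖f x‖ ^ q + ‖g x‖ ^ q) := by
      filter_upwards [hcE, hf, hg, Lp.coeFn_add f g, Lp.coeFn_sub f g] with x hx hfx hgx ha hb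
      have := hineq (E.fiber x) hx _ hfx _ hgx
      rw [Real.div_rpow (norm_nonneg _) zero_le_two, div_eq_inv_mul] at this
      rwa [ha, hb]
    have hI := integral_mono_ae
      (((hint (f + g)).const_mul _).add ((hint (f - g)).const_mul _))
      (((hint f).add (hint g)).const_mul _) hae
    simp only [Pi.add_apply] at hI
    rw [integral_add ((hint (f + g)).const_mul _) ((hint (f - g)).const_mul _),
      integral_const_mul, integral_const_mul, integral_const_mul,
      integral_add (hint f) (hint g), ← hnorm, ← hnorm, ← hnorm, ← hnorm, hf1, hg1,
      Real.one_rpow, ← div_eq_inv_mul, ← Real.div_rpow (norm_nonneg _) zero_le_two] at hI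
    have h1 : κ * ε ^ q ≤ κ * ‖f - g‖ ^ q := by gcongr
    have h2 := mul_le_mul_of_nonneg_left htε hκ.le
    linarith
  by_cases hs1 : s ≤ 1
  · have hlt : (1 - s) ^ q⁻¹ < 1 := Real.rpow_lt_one (by linarith) (by linarith) (by positivity)
    refine ⟨2 * (1 - (1 - s) ^ q⁻¹), by linarith, fun f hf g hg hfg => ?_⟩
    have := (Real.le_rpow_inv_iff_of_pos (by positivity) (by linarith) hq0).2 (key f g hf hg hfg)
    linarith
  · refine ⟨1, one_pos, fun f hf g hg hfg => ?_⟩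
    have h0 : 0 ≤ (‖f + g‖ / 2) ^ q := by positivity
    linarith [key f g hf hg hfg]

theorem BanachBundle.measurableSet_infDist_lt (E : BanachBundle X B) (b : B) (r : ℝ) :
    MeasurableSet {x | Metric.infDist b (E.fiber x : Set B) < r} := by
  convert E.weaklyMeasurable (Metric.ball b r) Metric.isOpen_ball using 1
  ext x
  simp only [Set.mem_ofPred_eq, Metric.infDist_lt_iff (E.fiber x).nonempty, dist_comm b]
  rfl

section Selection

variable [TopologicalSpace.SeparableSpace B] [MeasurableSpace B] [BorelSpace B]

/-- Improvement step in the measurable selection of a section. -/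
theorem BanachBundle.exists_measurable_infDist_lt (E : BanachBundle X B) {s : X → B}
    (hs : Measurable s) {r r' : ℝ} (hr' : 0 < r')
    (hsr : ∀ x, Metric.infDist (s x) (E.fiber x : Set B) < r) :
    ∃ s' : X → B, Measurable s' ∧ (∀ x, Metric.infDist (s' x) (E.fiber x : Set B) < r') ∧
      ∀ x, dist (s x) (s' x) < r + r' := by
  let b := TopologicalSpace.denseSeq B
  have hex : ∀ x, ∃ k, Metric.infDist (b k) (E.fiber x : Set B) < r' ∧
      dist (s x) (b k) < r + r' := by
    intro x
    obtain ⟨y, hy, hxy⟩ := (Metric.infDist_lt_iff (E.fiber x).nonempty).1 (hsr x)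
    obtain ⟨k, hk⟩ := (TopologicalSpace.denseRange_denseSeq B).exists_dist_lt y hr'
    refine ⟨k, (Metric.infDist_lt_iff (E.fiber x).nonempty).2 ⟨y, hy, by rwa [dist_comm]⟩, ?_⟩
    linarith [dist_triangle (s x) y (b k)]
  classical
  refine ⟨fun x => b (Nat.find (hex x)), ?_, fun x => (Nat.find_spec (hex x)).1,
    fun x => (Nat.find_spec (hex x)).2⟩
  refine (measurable_from_nat (f := b)).comp (measurable_find hex fun k => ?_)
  exact (E.measurableSet_infDist_lt (b k) r').inter
    (measurableSet_lt (hs.dist measurable_const) measurable_const)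

/-- Through any point near the fibers there is a nearby measurable section. -/
theorem BanachBundle.exists_measurable_section [CompleteSpace B] (E : BanachBundle X B)
    (b : B) {τ : ℝ} (hτ : 0 < τ) :
    ∃ f : X → B, Measurable f ∧ (∀ x, f x ∈ E.fiber x) ∧
      ∀ x, Metric.infDist b (E.fiber x : Set B) < τ → dist b (f x) ≤ 4 * τ := by
  classical
  let A := {x | Metric.infDist b (E.fiber x : Set B) < τ}
  let r : ℕ → ℝ := fun n => τ * (1 / 2) ^ n
  have hr : ∀ n, 0 < r n := fun n => by positivity
  let P : ℕ → (X → B) → Prop := fun n s =>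
    Measurable s ∧ ∀ x, Metric.infDist (s x) (E.fiber x : Set B) < r n
  have h0 : P 0 (A.indicator fun _ => b) := by
    refine ⟨measurable_const.indicator (E.measurableSet_infDist_lt b τ), fun x => ?_⟩
    by_cases hx : x ∈ A
    · rw [Set.indicator_of_mem hx]
      simpa [r] using show Metric.infDist b (E.fiber x : Set B) < τ from hx
    · simpa [hx, r, Metric.infDist_zero_of_mem (E.fiber x).zero_mem] using hτ
  have hstep : ∀ n s, P n s → ∃ s', P (n + 1) s' ∧ ∀ x, dist (s x) (s' x) < r n + r (n + 1) := by
    rintro n s ⟨hs, hsr⟩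
    obtain ⟨s', h1, h2, h3⟩ := E.exists_measurable_infDist_lt hs (hr (n + 1)) hsr
    exact ⟨s', ⟨h1, h2⟩, h3⟩
  choose! next hnext hdist using hstep
  let u : ℕ → X → B := fun n => Nat.rec (A.indicator fun _ => b) next n
  have hu : ∀ n, P n (u n) := fun n => by
    induction n with
    | zero => exact h0
    | succ n ih => exact hnext n _ ih
  have hgeo : ∀ x n, dist (u n x) (u (n + 1) x) ≤ (2 * τ) * (1 / 2) ^ n := fun x n => by
    have h1 := hdist n _ (hu n) x
    have h2 : r n + r (n + 1) ≤ (2 * τ) * (1 / 2) ^ n := by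
      have : 0 < (1 / 2 : ℝ) ^ n := by positivity
      simp only [r, pow_succ]
      nlinarith
    exact h1.le.trans h2
  have hlim : ∀ x, ∃ y, Filter.Tendsto (fun n => u n x) Filter.atTop (nhds y) := fun x =>
    cauchySeq_tendsto_of_complete (cauchySeq_of_le_geometric _ _ (by norm_num) (hgeo x))
  choose f hf using hlim
  refine ⟨f, measurable_of_tendsto_metrizable (fun n => (hu n).1) (tendsto_pi_nhds.2 hf),
    fun x => ?_, fun x hx => ?_⟩
  · have hr0 : Filter.Tendsto r Filter.atTop (nhds 0) := by
      simpa [r] using (tendsto_pow_atTop_nhds_zero_of_lt_one (by norm_num : (0 : ℝ) ≤ 1 / 2)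
        (by norm_num)).const_mul τ
    have hd : Filter.Tendsto (fun n => Metric.infDist (u n x) (E.fiber x : Set B))
        Filter.atTop (nhds (Metric.infDist (f x) (E.fiber x : Set B))) :=
      ((Metric.continuous_infDist_pt _).tendsto _).comp (hf x)
    have hle := le_of_tendsto_of_tendsto' hd hr0 fun n => ((hu n).2 x).le
    exact ((E.isClosed_fiber x).mem_iff_infDist_zero (E.fiber x).nonempty).2
      (hle.antisymm Metric.infDist_nonneg)
  · have h1 := dist_le_of_le_geometric_of_tendsto₀ _ _ (by norm_num) (hgeo x) (hf x)
    have h2 : u 0 x = b := Set.indicator_of_mem (show x ∈ A from hx) _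
    rw [h2] at h1
    exact h1.trans_eq (by ring)

end Selection

/-- A pointwise unit measurable section over a set of finite positive measure normalizes to a
unit element of the section space. -/
theorem BanachBundle.exists_section_norm_eq_one (E : BanachBundle X B) {A : Set X}
    (hA : MeasurableSet A) (hA0 : m A ≠ 0) (hAm : m A ≠ ∞) (hp0 : p ≠ 0) (hp : p ≠ ∞)
    {v : X → B} (hv : StronglyMeasurable v) (hvE : ∀ x, v x ∈ E.fiber x)
    (hv1 : ∀ x ∈ A, ‖v x‖ = 1) :
    ∃ f : E.sections m p, ‖f‖ = 1 ∧
      ∀ᵐ x ∂m, x ∈ A → (f : Lp B p m) x = (m.real A ^ (1 / p.toReal))⁻¹ • v x := by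
  have hM : 0 < m.real A ^ (1 / p.toReal) :=
    Real.rpow_pos_of_pos (ENNReal.toReal_pos hA0 hAm) _
  set M := m.real A ^ (1 / p.toReal) with hM_def
  let F : X → B := A.indicator fun x => M⁻¹ • v x
  have hnormF : ∀ x, ‖F x‖ = ‖A.indicator (fun _ => M⁻¹) x‖ := fun x => by
    by_cases hx : x ∈ A
    · simp [F, hx, norm_smul, hv1 x hx]
    · simp [F, hx]
  have hF : MemLp F p m :=
    (memLp_indicator_const p hA M⁻¹ (Or.inr hAm)).of_le
      ((hv.const_smul M⁻¹).indicator hA).aestronglyMeasurable (.of_forall fun x => (hnormF x).le)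
  have hcoe := hF.coeFn_toLp
  refine ⟨⟨hF.toLp F, ?_⟩, ?_, ?_⟩
  · change ∀ᵐ x ∂m, (hF.toLp F : X → B) x ∈ E.fiber x
    filter_upwards [hcoe] with x hx
    rw [hx]
    by_cases hxA : x ∈ A
    · simpa [F, hxA] using (E.fiber x).smul_mem _ (hvE x)
    · simp [F, hxA]
  · change ‖hF.toLp F‖ = 1
    have : ‖hF.toLp F‖ = ‖indicatorConstLp p hA hAm M⁻¹‖ := by
      rw [Lp.norm_toLp, indicatorConstLp, Lp.norm_toLp]
      exact congrArg _ (eLpNorm_congr_norm_ae (.of_forall hnormF))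
    rw [this, norm_indicatorConstLp hp0 hp, Real.norm_of_nonneg (by positivity), ← hM_def,
      inv_mul_cancel₀ hM.ne']
  · filter_upwards [hcoe] with x hx hxA
    rw [hx]
    simp [F, hxA]

theorem BanachBundle.exists_ae_le_fiberModulus [SigmaFinite m] [CompleteSpace B]
    [TopologicalSpace.SeparableSpace B] (E : BanachBundle X B)
    (hp : p ≠ ∞) [UniformConvexSpace (E.sections m p)] {ε : ℝ} (hε : 0 < ε) :
    ∃ c > (0 : ℝ), ∀ᵐ x ∂m, c ≤ fiberModulus (E.fiber x : Set B) ε := by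
  borelize B
  have hp0 : p ≠ 0 := (zero_lt_one.trans_le (Fact.out : 1 ≤ p)).ne'
  obtain ⟨δ, hδ, hconv⟩ :=
    exists_forall_sphere_dist_add_le_two_sub (E.sections m p) (half_pos hε)
  set c := min (δ / 8) (1 / 2) with hc_def
  have hc : 0 < c := lt_min (by positivity) (by norm_num)
  have hc1 : c ≤ 1 / 2 := min_le_right _ _
  have hcδ : c ≤ δ / 8 := min_le_left _ _
  set τ := min (ε / 40) (min (δ / 80) (1 / 80)) with hτ_def
  have hτ : 0 < τ := lt_min (by positivity) (lt_min (by positivity) (by norm_num))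
  have hτε : τ ≤ ε / 40 := min_le_left _ _
  have hτδ : τ ≤ δ / 80 := (min_le_right _ _).trans (min_le_left _ _)
  have hτ1 : τ ≤ 1 / 80 := (min_le_right _ _).trans (min_le_right _ _)
  refine ⟨c, hc, ?_⟩
  let b := TopologicalSpace.denseSeq B
  let near (i : ℕ) : Set X := {x | Metric.infDist (b i) (E.fiber x : Set B) < τ}
  let bad (i j : ℕ) : Prop := ∃ v w : B, dist (b i) v < τ ∧ dist (b j) w < τ ∧
    ‖v‖ = 1 ∧ ‖w‖ = 1 ∧ ε ≤ ‖v - w‖ ∧ 2 * (1 - c) < ‖v + w‖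
  have hnull : ∀ i j, bad i j → m (near i ∩ near j) = 0 := by
    rintro i j ⟨v₀, w₀, hv₀, hw₀, hv1, hw1, hsub, hadd⟩
    by_contra hpos
    have hmeas : MeasurableSet (near i ∩ near j) :=
      (E.measurableSet_infDist_lt _ _).inter (E.measurableSet_infDist_lt _ _)
    obtain ⟨A, hAsub, hA, hA0, hAm⟩ :
        ∃ A ⊆ near i ∩ near j, MeasurableSet A ∧ m A ≠ 0 ∧ m A ≠ ∞ := by
      obtain ⟨A, hA, hAsub, h0, hlt⟩ :=
        Measure.exists_subset_measure_lt_top hmeas (pos_iff_ne_zero.2 hpos)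
      exact ⟨A, hAsub, hA, h0.ne', hlt.ne⟩
    have hM : 0 < m.real A ^ (1 / p.toReal) :=
      Real.rpow_pos_of_pos (ENNReal.toReal_pos hA0 hAm) _
    have hunit : ∀ k (u : B), dist (b k) u < τ → ‖u‖ = 1 → A ⊆ near k →
        ∃ v : X → B, StronglyMeasurable v ∧ (∀ x, v x ∈ E.fiber x) ∧
          ∀ x ∈ A, ‖v x‖ = 1 ∧ ‖v x - u‖ ≤ 10 * τ := by
      intro k u hku hu hAk
      obtain ⟨f, hf, hfE, hfd⟩ := E.exists_measurable_section (b k) hτ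
      refine ⟨fun x => ‖f x‖⁻¹ • f x, (hf.norm.inv.smul hf).stronglyMeasurable,
        fun x => (E.fiber x).smul_mem _ (hfE x), fun x hx => ?_⟩
      have hfu : ‖f x - u‖ ≤ 5 * τ := by
        rw [← dist_eq_norm]
        linarith [hfd x (hAk hx), dist_triangle_left (f x) u (b k)]
      refine ⟨?_, (norm_inv_smul_sub_le hu).trans (by linarith)⟩
      have hf0 : ‖f x‖ ≠ 0 := fun h0 => by
        rw [norm_eq_zero.1 h0, zero_sub, norm_neg, hu] at hfu
        linarith
      rw [norm_smul, norm_inv, norm_norm, inv_mul_cancel₀ hf0]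
    obtain ⟨v, hv, hvE, hvA⟩ := hunit i v₀ hv₀ hv1 fun x hx => (hAsub hx).1
    obtain ⟨w, hw, hwE, hwA⟩ := hunit j w₀ hw₀ hw1 fun x hx => (hAsub hx).2
    obtain ⟨f, hf1, hf⟩ := E.exists_section_norm_eq_one hA hA0 hAm hp0 hp hv hvE
      fun x hx => (hvA x hx).1
    obtain ⟨g, hg1, hg⟩ := E.exists_section_norm_eq_one hA hA0 hAm hp0 hp hw hwE
      fun x hx => (hwA x hx).1
    set M := m.real A ^ (1 / p.toReal) with hM_def
    have hlower : ∀ {t : ℝ} {h : Lp B p m} {z : X → B}, 0 ≤ t →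
        (∀ᵐ x ∂m, x ∈ A → h x = M⁻¹ • z x) → (∀ x ∈ A, t ≤ ‖z x‖) → t ≤ ‖h‖ := by
      intro t h z ht hh hz
      have : M⁻¹ * t * M ≤ ‖h‖ := by
        refine Lp.mul_measureReal_rpow_le_norm hA hAm hp0 hp (by positivity) ?_
        filter_upwards [hh] with x hx hxA
        rw [hx hxA, norm_smul, Real.norm_of_nonneg (by positivity)]
        gcongr
        exact hz x hxA
      rwa [mul_right_comm, inv_mul_cancel₀ hM.ne', one_mul] at this
    have hd : ε / 2 ≤ ‖f - g‖ := by
      refine hlower (h := (f : Lp B p m) - g) (z := v - w) (by positivity) ?_ fun x hx => ?_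
      · filter_upwards [hf, hg, Lp.coeFn_sub (f : Lp B p m) g] with x h1 h2 h3 hxA
        rw [h3, Pi.sub_apply, h1 hxA, h2 hxA, Pi.sub_apply, smul_sub]
      · have h1 := norm_add₃_le (a := v x - w x) (b := -(v x - v₀)) (c := w x - w₀)
        rw [show v x - w x + -(v x - v₀) + (w x - w₀) = v₀ - w₀ by abel, norm_neg] at h1
        have h2 := (hvA x hx).2
        have h3 := (hwA x hx).2
        rw [Pi.sub_apply]
        linarith
    have hs : 2 * (1 - c) - 20 * τ ≤ ‖f + g‖ := by
      refine hlower (h := (f : Lp B p m) + g) (z := v + w) (by linarith) ?_ fun x hx => ?_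
      · filter_upwards [hf, hg, Lp.coeFn_add (f : Lp B p m) g] with x h1 h2 h3 hxA
        rw [h3, Pi.add_apply, h1 hxA, h2 hxA, Pi.add_apply, smul_add]
      · have h1 := norm_add₃_le (a := v x + w x) (b := -(v x - v₀)) (c := -(w x - w₀))
        rw [show v x + w x + -(v x - v₀) + -(w x - w₀) = v₀ + w₀ by abel, norm_neg,
          norm_neg] at h1
        have h2 := (hvA x hx).2
        have h3 := (hwA x hx).2
        rw [Pi.add_apply]
        linarith
    linarith [hconv hf1 hg1 hd]
  have hae : ∀ᵐ x ∂m, ∀ i j, bad i j → x ∉ near i ∩ near j := by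
    simp only [ae_all_iff]
    exact fun i j hij => measure_eq_zero_iff_ae_notMem.1 (hnull i j hij)
  filter_upwards [hae] with x hx
  by_contra! hlt
  obtain ⟨v, hv, w, hw, hv1, hw1, hsub, hadd⟩ :=
    exists_of_fiberModulus_lt (by linarith) hlt
  obtain ⟨i, hi⟩ := (TopologicalSpace.denseRange_denseSeq B).exists_dist_lt v hτ
  obtain ⟨j, hj⟩ := (TopologicalSpace.denseRange_denseSeq B).exists_dist_lt w hτ
  rw [dist_comm] at hi hj
  exact hx i j ⟨v, w, hi, hj, hv1, hw1, hsub, hadd⟩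
    ⟨(Metric.infDist_lt_iff (E.fiber x).nonempty).2 ⟨v, hv, hi⟩,
      (Metric.infDist_lt_iff (E.fiber x).nonempty).2 ⟨w, hw, hj⟩⟩

end Sections

/-- Uniformly convex bundles/modules. If the fibers of a Banach bundle are uniformly convex
with a uniform (essential) lower bound on the modulus of convexity, then every section space
`Γ_p(E)`, `p ∈ (1,∞)`, is a uniformly convex Banach space; conversely, if `Γ_p(E)` is
uniformly convex for some `p ∈ (1,∞)`, then `ess inf_x δ_{E(x)}(ε) > 0` for every
`ε ∈ (0,2]`. -/
theorem uniformly_convex_bundle_iff_sections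
    {X B : Type*} [MeasurableSpace X] (m : Measure X) [SigmaFinite m]
    [NormedAddCommGroup B] [NormedSpace ℝ B] [CompleteSpace B]
    [TopologicalSpace.SeparableSpace B]
    (E : BanachBundle X B) :
    ((∀ ε ∈ Set.Ioc (0 : ℝ) 2, ∃ c > (0 : ℝ),
        ∀ᵐ x ∂m, c ≤ fiberModulus (E.fiber x : Set B) ε) →
      ∀ (p : ℝ≥0∞) (_ : Fact (1 ≤ p)), 1 < p → p ≠ ∞ →
        CompleteSpace ↥(E.sections m p) ∧ UniformConvexSpace ↥(E.sections m p)) ∧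
    (∀ (p : ℝ≥0∞) (_ : Fact (1 ≤ p)), 1 < p → p ≠ ∞ →
      UniformConvexSpace ↥(E.sections m p) →
        ∀ ε ∈ Set.Ioc (0 : ℝ) 2, ∃ c > (0 : ℝ),
          ∀ᵐ x ∂m, c ≤ fiberModulus (E.fiber x : Set B) ε) := by
  refine ⟨fun h p _ hp hp' => ⟨E.isClosed_sections.completeSpace_coe,
    E.uniformConvexSpace_sections h hp hp'⟩, fun p _ _ hp' _ ε hε =>
    E.exists_ae_le_fiberModulus hp' hε.1⟩
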